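/- arXiv:math/9807142 — 3 statements merged into one kernel-verified Lean document; each statement's English description precedes it below -/
import Mathlib

section
/- Let h ∈ ℝ with 2h not a nonpositive integer. Then, as linear operators on ℂ[z], l₁∘F − F∘l₁ = id, l₀∘F − F∘l₀ = F, and l₋₁∘F − F∘l₋₁ = F∘F. -/
open Polynomial

/-- Multiplication by `z` on `ℂ[z]`: the generator `l₋₁`. -/
noncomputable def lNeg : Module.End ℂ (Polynomial ℂ) :=
  LinearMap.mulLeft ℂ (Polynomial.X : Polynomial ℂ)

/-- The differentiation operator `D = d/dz` on `ℂ[z]`. -/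
noncomputable def Dop : Module.End ℂ (Polynomial ℂ) :=
  Polynomial.derivative

/-- The generator `l₀ = z·d/dz + h·id`. -/
noncomputable def lZero (h : ℝ) : Module.End ℂ (Polynomial ℂ) :=
  lNeg * Dop + (h : ℂ) • 1

/-- The generator `l₁ = z·d²/dz² + 2h·d/dz`. -/
noncomputable def lOne (h : ℝ) : Module.End ℂ (Polynomial ℂ) :=
  lNeg * Dop * Dop + ((2 * h : ℝ) : ℂ) • Dop

theorem lNeg_pow (n : ℕ) : lNeg (X ^ n) = (X ^ (n + 1) : Polynomial ℂ) := by
  simp [lNeg, pow_succ']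

theorem Dop_pow_succ (n : ℕ) :
    Dop (X ^ (n + 1)) = ((n : ℂ) + 1) • (X ^ n : Polynomial ℂ) := by
  simp [Dop, smul_eq_C_mul]

theorem Dop_one : Dop (X ^ 0) = 0 := by
  simp [Dop]

theorem lZero_pow (h : ℝ) (n : ℕ) :
    lZero h (X ^ n) = ((n : ℂ) + h) • (X ^ n : Polynomial ℂ) := by
  simp only [lZero, LinearMap.add_apply, Module.End.mul_apply, LinearMap.smul_apply,
    Module.End.one_apply]
  cases n with
  | zero => rw [Dop_one]; simp
  | succ n => rw [Dop_pow_succ, map_smul, lNeg_pow, ← add_smul]; push_cast; rfl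

theorem lOne_pow_zero (h : ℝ) : lOne h (X ^ 0) = 0 := by
  simp only [lOne, LinearMap.add_apply, Module.End.mul_apply, LinearMap.smul_apply, Dop_one,
    map_zero, smul_zero, add_zero]

theorem lOne_pow_succ (h : ℝ) (n : ℕ) :
    lOne h (X ^ (n + 1)) = (((n : ℂ) + 1) * (n + 2 * h)) • (X ^ n : Polynomial ℂ) := by
  simp only [lOne, LinearMap.add_apply, Module.End.mul_apply, LinearMap.smul_apply,
    Dop_pow_succ, map_smul]
  cases n with
  | zero => rw [Dop_one]; simp
  | succ n =>
    rw [Dop_pow_succ, map_smul, lNeg_pow, smul_smul, smul_smul, ← add_smul]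
    congr 1
    push_cast
    ring

/-- if `2h` is not a nonpositive integer and `F` is the operator with
`F(zⁿ) = z^(n+1)/(n+2h)`, then `[l₁, F] = id`, `[l₀, F] = F`, `[l₋₁, F] = F²`. -/
theorem stmt1 (h : ℝ) (hh : ∀ n : ℕ, 2 * h ≠ -(n : ℝ))
    (F : Module.End ℂ (Polynomial ℂ))
    (hF : ∀ n : ℕ, F (Polynomial.X ^ n) = ((n : ℂ) + 2 * h)⁻¹ • Polynomial.X ^ (n + 1)) :
    lOne h * F - F * lOne h = 1 ∧
    lZero h * F - F * lZero h = F ∧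
    lNeg * F - F * lNeg = F * F := by
  have hne : ∀ n : ℕ, (n : ℂ) + 2 * h ≠ 0 := by
    intro n e
    apply hh n
    have e' : ((n + 2 * h : ℝ) : ℂ) = 0 := by push_cast; exact e
    have := Complex.ofReal_eq_zero.mp e'
    linarith
  have key : ∀ A B : Module.End ℂ (Polynomial ℂ), (∀ n : ℕ, A (X ^ n) = B (X ^ n)) → A = B := by
    intro A B hAB
    apply Polynomial.lhom_ext'
    intro n
    ext
    simp [monomial_one_right_eq_X_pow, hAB]
  refine ⟨key _ _ fun n => ?_, key _ _ fun n => ?_, key _ _ fun n => ?_⟩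
  · simp only [LinearMap.sub_apply, Module.End.mul_apply, Module.End.one_apply, hF, map_smul,
      lOne_pow_succ]
    have h0 := hne n
    cases n with
    | zero =>
      rw [lOne_pow_zero, map_zero, sub_zero, smul_smul]
      rw [show ((((0 : ℕ) : ℂ) + 2 * h)⁻¹ * ((((0 : ℕ) : ℂ) + 1) * (((0 : ℕ) : ℂ) + 2 * h))) = 1 by
        field_simp; simp, one_smul]
    | succ n =>
      have h1 := hne n
      rw [lOne_pow_succ, map_smul, hF, smul_smul, smul_smul, ← sub_smul]
      convert one_smul ℂ _ using 2
      field_simp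
      push_cast
      ring
  · simp only [LinearMap.sub_apply, Module.End.mul_apply, hF, map_smul, lZero_pow, smul_smul,
      ← sub_smul]
    congr 1
    push_cast
    ring
  · simp only [LinearMap.sub_apply, Module.End.mul_apply, hF, map_smul, lNeg_pow, smul_smul,
      ← sub_smul]
    congr 1
    have h0 := hne n
    have h1 := hne (n + 1)
    push_cast at h1 ⊢
    field_simp
    ring
end

section
/- Let h ∈ ℝ with 2h not a nonpositive integer and h ≠ 1/2, and set q_R = 1/(2h−1). Then the operators D = d/dz and F on ℂ[z] satisfy the Lobachevskii–Berezin relations: (F∘D)∘(D∘F) = (D∘F)∘(F∘D), and D∘F − F∘D = q_R·(id − D∘F)∘(id − F∘D). -/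
open Polynomial

lemma DF_pow (h : ℝ) (F : Module.End ℂ (Polynomial ℂ))
    (hF : ∀ n : ℕ, F (Polynomial.X ^ n) = ((n : ℂ) + 2 * h)⁻¹ • Polynomial.X ^ (n + 1)) (n : ℕ) :
    Dop (F (Polynomial.X ^ n)) =
      (((n : ℂ) + 1) * ((n : ℂ) + 2 * h)⁻¹) • (Polynomial.X ^ n : Polynomial ℂ) := by
  rw [hF, map_smul]
  simp only [Dop, Polynomial.derivative_X_pow, Polynomial.smul_eq_C_mul, map_mul]
  push_cast
  simp only [map_add, map_one, add_tsub_cancel_right]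
  ring

lemma FD_pow (h : ℝ) (F : Module.End ℂ (Polynomial ℂ))
    (hF : ∀ n : ℕ, F (Polynomial.X ^ n) = ((n : ℂ) + 2 * h)⁻¹ • Polynomial.X ^ (n + 1)) (n : ℕ) :
    F (Dop (Polynomial.X ^ n)) =
      ((n : ℂ) * ((n : ℂ) + 2 * h - 1)⁻¹) • (Polynomial.X ^ n : Polynomial ℂ) := by
  cases n with
  | zero => simp [Dop]
  | succ k =>
    have : Dop (Polynomial.X ^ (k + 1)) = ((k : ℂ) + 1) • (Polynomial.X ^ k : Polynomial ℂ) := by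
      simp [Dop, Polynomial.derivative_X_pow, Polynomial.smul_eq_C_mul]
    rw [this, map_smul, hF, smul_smul]
    push_cast
    congr 3
    ring

/-- the Lobachevskii–Berezin relations for `D` and `F`. -/
theorem stmt3 (h : ℝ) (hh : ∀ n : ℕ, 2 * h ≠ -(n : ℝ)) (hh' : h ≠ 1 / 2)
    (F : Module.End ℂ (Polynomial ℂ))
    (hF : ∀ n : ℕ, F (Polynomial.X ^ n) = ((n : ℂ) + 2 * h)⁻¹ • Polynomial.X ^ (n + 1)) :
    (F * Dop) * (Dop * F) = (Dop * F) * (F * Dop) ∧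
    Dop * F - F * Dop =
      (2 * (h : ℂ) - 1)⁻¹ • ((1 - Dop * F) * (1 - F * Dop)) := by
  have hD := DF_pow h F hF
  have hE := FD_pow h F hF
  have h1 : ∀ n : ℕ, (n : ℂ) + 2 * h ≠ 0 := by
    intro n hn
    apply hh n
    have : (n : ℝ) + 2 * h = 0 := by exact_mod_cast hn
    linarith
  have h2 : 2 * (h : ℂ) - 1 ≠ 0 := by
    intro hn
    apply hh'
    have : 2 * h - 1 = 0 := by exact_mod_cast hn
    linarith
  have h3 : ∀ n : ℕ, (n : ℂ) + 2 * h - 1 ≠ 0 := by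
    intro n
    cases n with
    | zero => simpa using h2
    | succ k =>
      have := h1 k
      push_cast
      intro hn
      apply this
      linear_combination hn
  constructor
  · refine Polynomial.lhom_ext' fun n => LinearMap.ext_ring ?_
    simp only [LinearMap.comp_apply, Polynomial.monomial_one_right_eq_X_pow, Module.End.mul_apply,
      hD, hE, map_smul, smul_smul]
    rw [mul_comm]
  · refine Polynomial.lhom_ext' fun n => LinearMap.ext_ring ?_
    simp only [LinearMap.comp_apply, Polynomial.monomial_one_right_eq_X_pow, Module.End.mul_apply,
      LinearMap.sub_apply, LinearMap.smul_apply, Module.End.one_apply, map_sub,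
      hD, hE, map_smul]
    have a := h1 n
    have b := h3 n
    match_scalars
    field_simp
    ring
end

section
/- Let h ∈ ℝ. There exists a linear subspace U of ℂ[z] with U ≠ {0} and U ≠ ℂ[z] that is invariant under all three operators l₋₁, l₀, l₁ if and only if 2h is a nonpositive integer (i.e. h = −n₀/2 for some nonnegative integer n₀); in that case the span of {z^m : m ≥ n₀+1} is such an invariant subspace. In other words, the Verma module V_h over sl(2,ℂ) is nondegenerate (contains no proper nonzero submodule) exactly when h ≠ −n/2 for all nonnegative integers n. -/
open Polynomial

theorem coeff_lNeg_succ (p : Polynomial ℂ) (k : ℕ) : (lNeg p).coeff (k + 1) = p.coeff k := by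
  simp [lNeg]

theorem coeff_lNeg_zero (p : Polynomial ℂ) : (lNeg p).coeff 0 = 0 := by
  simp [lNeg]

theorem coeff_lZero (h : ℝ) (p : Polynomial ℂ) (k : ℕ) :
    (lZero h p).coeff k = ((k : ℂ) + h) * p.coeff k := by
  cases k with
  | zero => simp [lZero, lNeg, Dop]
  | succ j =>
    simp [lZero, lNeg, Dop, Polynomial.coeff_derivative]
    ring

theorem coeff_lOne (h : ℝ) (p : Polynomial ℂ) (k : ℕ) :
    (lOne h p).coeff k = ((k : ℂ) + 1) * ((k : ℂ) + 2 * h) * p.coeff (k + 1) := by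
  cases k with
  | zero =>
    simp [lOne, lNeg, Dop, Polynomial.coeff_derivative]
  | succ j =>
    simp [lOne, lNeg, Dop, Polynomial.coeff_derivative]
    ring

theorem one_mem_of_invariant (h : ℝ) (hh : ∀ n : ℕ, h ≠ -(n : ℝ) / 2)
    (U : Submodule ℂ (Polynomial ℂ)) (h1 : ∀ p ∈ U, lOne h p ∈ U) (n : ℕ) :
    ∀ p ∈ U, p.natDegree ≤ n → p ≠ 0 → (1 : Polynomial ℂ) ∈ U := by
  induction n with
  | zero =>
    intro p hp hd h0
    have hC := Polynomial.eq_C_of_natDegree_le_zero hd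
    have hc : p.coeff 0 ≠ 0 := by
      intro hc
      rw [hc, Polynomial.C_0] at hC
      exact h0 hC
    have := U.smul_mem (p.coeff 0)⁻¹ hp
    rw [hC, Polynomial.smul_C] at this
    simpa [hc] using this
  | succ n ih =>
    intro p hp hd h0
    by_cases hn : p.coeff (n + 1) = 0
    · refine ih p hp ?_ h0
      rw [Polynomial.natDegree_le_iff_coeff_eq_zero] at hd ⊢
      intro N hN
      rcases Nat.lt_or_ge (n + 1) N with hlt | hge
      · exact hd N hlt
      · have : N = n + 1 := by omega
        rw [this, hn]
    · refine ih (lOne h p) (h1 p hp) ?_ ?_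
      · rw [Polynomial.natDegree_le_iff_coeff_eq_zero] at hd ⊢
        intro N hN
        rw [coeff_lOne, hd (N + 1) (by omega), mul_zero]
      · intro hz
        have hc := coeff_lOne h p n
        rw [hz, Polynomial.coeff_zero] at hc
        have h2 : ((n : ℂ) + 2 * h) ≠ 0 := by
          intro he
          have he' : (n : ℝ) + 2 * h = 0 := by exact_mod_cast he
          exact hh n (by linarith)
        have h3 : ((n : ℂ) + 1) ≠ 0 := Nat.cast_add_one_ne_zero n
        exact mul_ne_zero (mul_ne_zero h3 h2) hn hc.symm

theorem eq_top_of_one_mem (U : Submodule ℂ (Polynomial ℂ)) (hm : ∀ p ∈ U, lNeg p ∈ U)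
    (h1 : (1 : Polynomial ℂ) ∈ U) : U = ⊤ := by
  have hX : ∀ n : ℕ, (Polynomial.X : Polynomial ℂ) ^ n ∈ U := by
    intro n
    induction n with
    | zero => simpa using h1
    | succ n ih =>
      have := hm _ ih
      simpa [lNeg, pow_succ'] using this
  rw [eq_top_iff]
  intro p _
  rw [p.as_sum_support_C_mul_X_pow]
  refine U.sum_mem fun i _ => ?_
  rw [← Polynomial.smul_eq_C_mul]
  exact U.smul_mem _ (hX i)

theorem mem_span_iff_coeff (n₀ : ℕ) (p : Polynomial ℂ) :
    p ∈ Submodule.span ℂ {q : Polynomial ℂ | ∃ m : ℕ, n₀ + 1 ≤ m ∧ q = Polynomial.X ^ m} ↔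
      ∀ k ≤ n₀, p.coeff k = 0 := by
  constructor
  · intro hp
    induction hp using Submodule.span_induction with
    | mem x hx =>
      obtain ⟨m, hm, rfl⟩ := hx
      intro k hk
      rw [Polynomial.coeff_X_pow, if_neg (by omega)]
    | zero => simp
    | add x y _ _ hx hy =>
      intro k hk
      rw [Polynomial.coeff_add, hx k hk, hy k hk, add_zero]
    | smul a x _ hx =>
      intro k hk
      rw [Polynomial.coeff_smul, hx k hk, smul_zero]
  · intro hp
    rw [p.as_sum_support_C_mul_X_pow]
    refine Submodule.sum_mem _ fun i hi => ?_
    rw [← Polynomial.smul_eq_C_mul]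
    refine Submodule.smul_mem _ _ (Submodule.subset_span ⟨i, ?_, rfl⟩)
    by_contra hlt
    exact Polynomial.mem_support_iff.mp hi (hp i (by omega))

theorem span_invariant (h : ℝ) (n₀ : ℕ) (hh : h = -(n₀ : ℝ) / 2)
    (U : Submodule ℂ (Polynomial ℂ))
    (hU : U = Submodule.span ℂ
      {q : Polynomial ℂ | ∃ m : ℕ, n₀ + 1 ≤ m ∧ q = Polynomial.X ^ m}) :
    U ≠ ⊥ ∧ U ≠ ⊤ ∧
      (∀ p ∈ U, lNeg p ∈ U) ∧ (∀ p ∈ U, lZero h p ∈ U) ∧ (∀ p ∈ U, lOne h p ∈ U) := by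
  have hmem : ∀ p, p ∈ U ↔ ∀ k ≤ n₀, p.coeff k = 0 := by
    intro p
    rw [hU]
    exact mem_span_iff_coeff n₀ p
  refine ⟨?_, ?_, ?_, ?_, ?_⟩
  · intro hb
    have hx : (Polynomial.X : Polynomial ℂ) ^ (n₀ + 1) ∈ U := by
      rw [hU]
      exact Submodule.subset_span ⟨n₀ + 1, le_rfl, rfl⟩
    rw [hb, Submodule.mem_bot] at hx
    exact pow_ne_zero _ Polynomial.X_ne_zero hx
  · intro ht
    have hx : (1 : Polynomial ℂ) ∈ U := by rw [ht]; trivial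
    have := (hmem 1).mp hx 0 (Nat.zero_le _)
    simp at this
  · intro p hp
    rw [hmem] at hp ⊢
    intro k hk
    cases k with
    | zero => exact coeff_lNeg_zero p
    | succ j => rw [coeff_lNeg_succ, hp j (by omega)]
  · intro p hp
    rw [hmem] at hp ⊢
    intro k hk
    rw [coeff_lZero, hp k hk, mul_zero]
  · intro p hp
    rw [hmem] at hp ⊢
    intro k hk
    rw [coeff_lOne]
    rcases Nat.lt_or_ge k n₀ with hlt | hge
    · rw [hp (k + 1) hlt, mul_zero]
    · have hk' : k = n₀ := le_antisymm hk hge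
      have : ((k : ℂ) + 2 * h) = 0 := by
        rw [hk', hh]
        push_cast
        ring
      rw [this, mul_zero, zero_mul]

/-- the Verma module `V_h` over `sl(2,ℂ)` has a proper nonzero invariant
subspace iff `2h` is a nonpositive integer (`h = −n₀/2`), in which case the span of
`{z^m : m ≥ n₀+1}` is such a subspace. -/
theorem stmt15 (h : ℝ) :
    ((∃ U : Submodule ℂ (Polynomial ℂ), U ≠ ⊥ ∧ U ≠ ⊤ ∧
        (∀ p ∈ U, lNeg p ∈ U) ∧ (∀ p ∈ U, lZero h p ∈ U) ∧ (∀ p ∈ U, lOne h p ∈ U)) ↔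
      ∃ n₀ : ℕ, h = -(n₀ : ℝ) / 2) ∧
    (∀ n₀ : ℕ, h = -(n₀ : ℝ) / 2 →
      ∀ U : Submodule ℂ (Polynomial ℂ),
        U = Submodule.span ℂ {q : Polynomial ℂ | ∃ m : ℕ, n₀ + 1 ≤ m ∧ q = Polynomial.X ^ m} →
        U ≠ ⊥ ∧ U ≠ ⊤ ∧
        (∀ p ∈ U, lNeg p ∈ U) ∧ (∀ p ∈ U, lZero h p ∈ U) ∧ (∀ p ∈ U, lOne h p ∈ U)) := by
  refine ⟨⟨?_, ?_⟩, fun n₀ hn U hU => span_invariant h n₀ hn U hU⟩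
  · rintro ⟨U, hb, ht, hm, _, h1⟩
    by_contra hne
    push Not at hne
    obtain ⟨p, hp, hp0⟩ := U.ne_bot_iff.mp hb
    exact ht (eq_top_of_one_mem U hm
      (one_mem_of_invariant h hne U h1 p.natDegree p hp le_rfl hp0))
  · rintro ⟨n₀, hn⟩
    exact ⟨_, span_invariant h n₀ hn _ rfl⟩
end
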